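/- arXiv:1507.08473 — 3 statements merged into one kernel-verified Lean document; each statement's English description precedes it below -/
import Mathlib

section
/- For i = 1,…,n, let Vᵢ be an mᵢ×mᵢ real symmetric positive definite matrix and Λᵢ an mᵢ×q real matrix. Suppose Ω* := Σᵢ ΛᵢᵀVᵢ⁻¹Λᵢ is invertible. Then the q×q matrix Σᵢ ΛᵢᵀVᵢΛᵢ − (Σᵢ ΛᵢᵀΛᵢ) Ω*⁻¹ (Σᵢ ΛᵢᵀΛᵢ) is positive semidefinite. -/
open Matrix

/-- Matrix Cauchy–Schwarz inequality behind Corollary 1: with `Vᵢ` symmetric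
positive definite and `Ω* = Σ ΛᵢᵀVᵢ⁻¹Λᵢ` invertible, the matrix
`Σ ΛᵢᵀVᵢΛᵢ − (Σ ΛᵢᵀΛᵢ) Ω*⁻¹ (Σ ΛᵢᵀΛᵢ)` is positive semidefinite. -/
theorem stmt3 {n q : ℕ} (m : Fin n → ℕ)
    (V : ∀ i, Matrix (Fin (m i)) (Fin (m i)) ℝ)
    (Λ : ∀ i, Matrix (Fin (m i)) (Fin q) ℝ)
    (hV : ∀ i, (V i).PosDef)
    (hΩ : IsUnit (∑ i, (Λ i)ᵀ * (V i)⁻¹ * Λ i).det) :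
    (∑ i, (Λ i)ᵀ * V i * Λ i -
      (∑ i, (Λ i)ᵀ * Λ i) * (∑ i, (Λ i)ᵀ * (V i)⁻¹ * Λ i)⁻¹ *
        (∑ i, (Λ i)ᵀ * Λ i)).PosSemidef := by
  set Ω := ∑ i, (Λ i)ᵀ * (V i)⁻¹ * Λ i with hΩd
  set S := ∑ i, (Λ i)ᵀ * Λ i with hS
  have hVt : ∀ i, (V i)ᵀ = V i := fun i => by
    have h := (hV i).isHermitian.eq
    rwa [conjTranspose_eq_transpose_of_trivial] at h
  have hVu : ∀ i, IsUnit (V i).det := fun i => (hV i).det_pos.ne'.isUnit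
  have hΩt : Ωᵀ = Ω := by
    simp [hΩd, transpose_sum, transpose_mul, transpose_nonsing_inv, hVt, Matrix.mul_assoc]
  have hSt : Sᵀ = S := by
    simp [hS, transpose_sum, transpose_mul]
  have hCt : (Ω⁻¹ * S)ᵀ = S * Ω⁻¹ := by
    rw [transpose_mul, transpose_nonsing_inv, hΩt, hSt]
  have key : ∑ i, (Λ i)ᵀ * V i * Λ i - S * Ω⁻¹ * S =
      ∑ i, (Λ i - (V i)⁻¹ * Λ i * (Ω⁻¹ * S))ᴴ * V i * (Λ i - (V i)⁻¹ * Λ i * (Ω⁻¹ * S)) := by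
    have hterm : ∀ i, (Λ i - (V i)⁻¹ * Λ i * (Ω⁻¹ * S))ᴴ * V i *
        (Λ i - (V i)⁻¹ * Λ i * (Ω⁻¹ * S)) =
        (Λ i)ᵀ * V i * Λ i - ((Λ i)ᵀ * Λ i) * (Ω⁻¹ * S) - (S * Ω⁻¹) * ((Λ i)ᵀ * Λ i)
          + (S * Ω⁻¹) * ((Λ i)ᵀ * (V i)⁻¹ * Λ i) * (Ω⁻¹ * S) := by
      intro i
      rw [conjTranspose_eq_transpose_of_trivial, transpose_sub, transpose_mul _ (Ω⁻¹ * S), hCt,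
        transpose_mul, transpose_nonsing_inv, hVt]
      simp only [Matrix.sub_mul, Matrix.mul_sub, Matrix.mul_assoc,
        mul_nonsing_inv_cancel_left _ _ (hVu i), nonsing_inv_mul_cancel_left _ _ (hVu i)]
      abel
    simp only [hterm]
    rw [Finset.sum_add_distrib, Finset.sum_sub_distrib, Finset.sum_sub_distrib,
      ← Finset.sum_mul, ← Finset.mul_sum, ← Finset.sum_mul, ← Finset.mul_sum, ← hS, ← hΩd]
    simp only [Matrix.mul_assoc, mul_nonsing_inv_cancel_left _ _ hΩ]
    abel
  rw [key]
  exact posSemidef_sum _ fun i _ => (hV i).posSemidef.conjTranspose_mul_mul_same _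
end

section
/- For i = 1,…,n, let Vᵢ be an mᵢ×mᵢ real symmetric positive definite matrix and Λᵢ an mᵢ×q real matrix. Set Ω₀ := Σᵢ ΛᵢᵀΛᵢ, Ω₁ := Σᵢ ΛᵢᵀVᵢΛᵢ, and Ω* := Σᵢ ΛᵢᵀVᵢ⁻¹Λᵢ, and suppose Ω₀ and Ω* are invertible. Then Ω₀⁻¹Ω₁Ω₀⁻¹ − Ω*⁻¹ is positive semidefinite. -/
open Matrix

/-- Finite-sample statement behind Corollary 1: the unweighted sandwich
covariance `Ω₀⁻¹Ω₁Ω₀⁻¹` dominates the optimally weighted covariance `Ω*⁻¹`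
in the positive semidefinite order. -/
theorem stmt4 {n q : ℕ} (m : Fin n → ℕ)
    (V : ∀ i, Matrix (Fin (m i)) (Fin (m i)) ℝ)
    (Λ : ∀ i, Matrix (Fin (m i)) (Fin q) ℝ)
    (hV : ∀ i, (V i).PosDef)
    (hΩ₀ : IsUnit (∑ i, (Λ i)ᵀ * Λ i).det)
    (hΩstar : IsUnit (∑ i, (Λ i)ᵀ * (V i)⁻¹ * Λ i).det) :
    ((∑ i, (Λ i)ᵀ * Λ i)⁻¹ * (∑ i, (Λ i)ᵀ * V i * Λ i) * (∑ i, (Λ i)ᵀ * Λ i)⁻¹ -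
      (∑ i, (Λ i)ᵀ * (V i)⁻¹ * Λ i)⁻¹).PosSemidef := by
  have hVd : ∀ i, IsUnit (V i).det := fun i => (Matrix.isUnit_iff_isUnit_det _).1 (hV i).isUnit
  have hVt : ∀ i, (V i)ᵀ = V i := fun i => by
    have := (hV i).isHermitian.eq
    rwa [conjTranspose_eq_transpose_of_trivial] at this
  set P := ∑ i, (Λ i)ᵀ * Λ i with hP
  set Q := ∑ i, (Λ i)ᵀ * V i * Λ i with hQ
  set R := ∑ i, (Λ i)ᵀ * (V i)⁻¹ * Λ i with hR
  have hPt : Pᵀ = P := by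
    simp [hP, transpose_sum, transpose_mul]
  have hRt : Rᵀ = R := by
    simp [hR, transpose_sum, transpose_mul, transpose_nonsing_inv, hVt, Matrix.mul_assoc]
  have key : P⁻¹ * Q * P⁻¹ - R⁻¹ =
      ∑ i, (Λ i * P⁻¹ - (V i)⁻¹ * Λ i * R⁻¹)ᴴ * V i * (Λ i * P⁻¹ - (V i)⁻¹ * Λ i * R⁻¹) := by
    have h1 : ∀ i, (Λ i * P⁻¹ - (V i)⁻¹ * Λ i * R⁻¹)ᴴ * V i *
        (Λ i * P⁻¹ - (V i)⁻¹ * Λ i * R⁻¹) =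
        P⁻¹ * ((Λ i)ᵀ * V i * Λ i) * P⁻¹ - P⁻¹ * ((Λ i)ᵀ * Λ i) * R⁻¹
        - R⁻¹ * ((Λ i)ᵀ * Λ i) * P⁻¹ + R⁻¹ * ((Λ i)ᵀ * (V i)⁻¹ * Λ i) * R⁻¹ := by
      intro i
      have e1 : (Λ i * P⁻¹ - (V i)⁻¹ * Λ i * R⁻¹)ᴴ =
          P⁻¹ * (Λ i)ᵀ - R⁻¹ * (Λ i)ᵀ * (V i)⁻¹ := by
        rw [conjTranspose_eq_transpose_of_trivial]
        simp [transpose_mul, transpose_nonsing_inv, hPt, hRt, hVt, Matrix.mul_assoc]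
      rw [e1]
      simp only [Matrix.sub_mul, Matrix.mul_sub, Matrix.mul_assoc,
        Matrix.mul_nonsing_inv_cancel_left _ _ (hVd i),
        Matrix.nonsing_inv_mul_cancel_left _ _ (hVd i)]
      abel
    rw [Finset.sum_congr rfl fun i _ => h1 i]
    simp only [Finset.sum_add_distrib, Finset.sum_sub_distrib, ← Matrix.mul_sum,
      ← Matrix.sum_mul]
    rw [← hP, ← hQ, ← hR, Matrix.nonsing_inv_mul _ hΩ₀, Matrix.nonsing_inv_mul _ hΩstar,
      Matrix.mul_assoc R⁻¹ P, Matrix.mul_nonsing_inv _ hΩ₀]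
    simp
  rw [key]
  exact posSemidef_sum _ fun i _ => (hV i).posSemidef.conjTranspose_mul_mul_same _
end

section
/- For i = 1,…,n, let Vᵢ be an mᵢ×mᵢ real symmetric positive definite matrix, Wᵢ an mᵢ×mᵢ real symmetric positive semidefinite matrix, and Λᵢ an mᵢ×q real matrix. Suppose H := Σᵢ ΛᵢᵀWᵢΛᵢ and Ω* := Σᵢ ΛᵢᵀVᵢ⁻¹Λᵢ are invertible. Then H⁻¹ (Σᵢ ΛᵢᵀWᵢVᵢWᵢΛᵢ) H⁻¹ − Ω*⁻¹ is positive semidefinite. -/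
open Matrix

/-- General weighted efficiency comparison: for any symmetric PSD weights `Wᵢ`,
the sandwich covariance `H⁻¹(Σ ΛᵢᵀWᵢVᵢWᵢΛᵢ)H⁻¹` with `H = Σ ΛᵢᵀWᵢΛᵢ`
dominates `Ω*⁻¹ = (Σ ΛᵢᵀVᵢ⁻¹Λᵢ)⁻¹` in the positive semidefinite order. -/
theorem stmt5 {n q : ℕ} (m : Fin n → ℕ)
    (V W : ∀ i, Matrix (Fin (m i)) (Fin (m i)) ℝ)
    (Λ : ∀ i, Matrix (Fin (m i)) (Fin q) ℝ)
    (hV : ∀ i, (V i).PosDef)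
    (hW : ∀ i, (W i).PosSemidef)
    (hH : IsUnit (∑ i, (Λ i)ᵀ * W i * Λ i).det)
    (hΩstar : IsUnit (∑ i, (Λ i)ᵀ * (V i)⁻¹ * Λ i).det) :
    ((∑ i, (Λ i)ᵀ * W i * Λ i)⁻¹ * (∑ i, (Λ i)ᵀ * W i * V i * W i * Λ i) *
        (∑ i, (Λ i)ᵀ * W i * Λ i)⁻¹ -
      (∑ i, (Λ i)ᵀ * (V i)⁻¹ * Λ i)⁻¹).PosSemidef := by
  have hVt : ∀ i, (V i)ᵀ = V i := fun i => by
    simpa [IsHermitian, conjTranspose_eq_transpose_of_trivial] using (hV i).isHermitian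
  have hWt : ∀ i, (W i)ᵀ = W i := fun i => by
    simpa [IsHermitian, conjTranspose_eq_transpose_of_trivial] using (hW i).isHermitian
  have hVu : ∀ i, IsUnit (V i).det := fun i => (hV i).det_pos.ne'.isUnit
  obtain ⟨H, hHd⟩ : ∃ H, H = ∑ i, (Λ i)ᵀ * W i * Λ i := ⟨_, rfl⟩
  obtain ⟨O, hOd⟩ : ∃ O, O = ∑ i, (Λ i)ᵀ * (V i)⁻¹ * Λ i := ⟨_, rfl⟩
  have hHt : Hᵀ = H := by
    rw [hHd, transpose_sum]
    refine Finset.sum_congr rfl fun i _ => ?_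
    simp only [transpose_mul, transpose_transpose, hWt, Matrix.mul_assoc]
  have hOt : Oᵀ = O := by
    rw [hOd, transpose_sum]
    refine Finset.sum_congr rfl fun i _ => ?_
    simp only [transpose_mul, transpose_transpose, transpose_nonsing_inv, hVt, Matrix.mul_assoc]
  rw [← hHd] at hH
  rw [← hOd] at hΩstar
  rw [← hHd, ← hOd]
  have key : H⁻¹ * (∑ i, (Λ i)ᵀ * W i * V i * W i * Λ i) * H⁻¹ - O⁻¹ =
      ∑ i, (W i * Λ i * H⁻¹ - (V i)⁻¹ * Λ i * O⁻¹)ᴴ * V i *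
        (W i * Λ i * H⁻¹ - (V i)⁻¹ * Λ i * O⁻¹) := by
    have e : ∀ i, (W i * Λ i * H⁻¹ - (V i)⁻¹ * Λ i * O⁻¹)ᴴ * V i *
        (W i * Λ i * H⁻¹ - (V i)⁻¹ * Λ i * O⁻¹) =
        H⁻¹ * ((Λ i)ᵀ * W i * V i * W i * Λ i) * H⁻¹ - H⁻¹ * ((Λ i)ᵀ * W i * Λ i) * O⁻¹
        - O⁻¹ * ((Λ i)ᵀ * W i * Λ i) * H⁻¹ + O⁻¹ * ((Λ i)ᵀ * (V i)⁻¹ * Λ i) * O⁻¹ := by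
      intro i
      rw [conjTranspose_eq_transpose_of_trivial]
      simp only [transpose_sub, transpose_mul, transpose_nonsing_inv, hVt, hWt, hHt, hOt,
        Matrix.sub_mul, Matrix.mul_sub, Matrix.mul_assoc,
        Matrix.mul_nonsing_inv_cancel_left _ _ (hVu i),
        Matrix.nonsing_inv_mul_cancel_left _ _ (hVu i)]
      abel
    simp only [e, Finset.sum_add_distrib, Finset.sum_sub_distrib, ← Finset.sum_mul,
      ← Finset.mul_sum, ← Matrix.sum_mul, ← Matrix.mul_sum, ← hHd, ← hOd]
    rw [nonsing_inv_mul _ hH, nonsing_inv_mul _ hΩstar, Matrix.mul_assoc O⁻¹ H,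
      mul_nonsing_inv _ hH]
    simp
  rw [key]
  exact posSemidef_sum _ fun i _ => (hV i).posSemidef.conjTranspose_mul_mul_same _
end
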